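/- arXiv:1905.08750 — 2 statements merged into one kernel-verified Lean document; each statement's English description precedes it below -/
import Mathlib

section
/- Let U ∈ ℂ^{M×P} have full column rank and set P_U = U(U*U)^{-1}U*. If A ∈ ℂ^{M×M} is such that the matrix powers A^i converge to P_U as i → ∞, then A·P_U = P_U, P_U·A = P_U, and ρ(A − P_U) < 1. -/
/-!
Let `Q` be the limit of `A ^ i`. Shifting the index and squaring pass to the limit by continuity of
multiplication, so `A * Q = Q`, `Q * A = Q` and `Q * Q = Q`. Hence `(A - Q) ^ (i + 1) =
A ^ (i + 1) - Q → 0`, and an element whose powers tend to zero has spectral radius less than one,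
because `ρ(B) ^ (n + 1) ≤ ‖B ^ (n + 1)‖ * ‖1‖` for every `n`.
-/

section Limits

variable {R : Type*} [Monoid R] [TopologicalSpace R] [ContinuousMul R] [T2Space R] {a q : R}

lemma mul_limit_of_tendsto_pow (h : Filter.Tendsto (fun i : ℕ => a ^ i) Filter.atTop (nhds q)) :
    a * q = q := by
  refine tendsto_nhds_unique (h.const_mul a) ?_
  simpa only [pow_succ'] using (Filter.tendsto_add_atTop_iff_nat 1).2 h

lemma limit_mul_of_tendsto_pow (h : Filter.Tendsto (fun i : ℕ => a ^ i) Filter.atTop (nhds q)) :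
    q * a = q := by
  refine tendsto_nhds_unique (h.mul_const a) ?_
  simpa only [pow_succ] using (Filter.tendsto_add_atTop_iff_nat 1).2 h

lemma limit_mul_self_of_tendsto_pow
    (h : Filter.Tendsto (fun i : ℕ => a ^ i) Filter.atTop (nhds q)) : q * q = q := by
  refine tendsto_nhds_unique (h.mul h) ?_
  simp only [← pow_add]
  exact h.comp (Filter.tendsto_atTop_mono (fun i => Nat.le_add_left i i) Filter.tendsto_id)

end Limits

lemma sub_pow_succ_of_absorbing {R : Type*} [Ring R] {a q : R} (h₁ : a * q = q) (h₂ : q * a = q)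
    (h₃ : q * q = q) (n : ℕ) : (a - q) ^ (n + 1) = a ^ (n + 1) - q := by
  have haq : ∀ n : ℕ, a ^ n * q = q := fun n => by
    induction n with
    | zero => simp
    | succ k ih => rw [pow_succ, mul_assoc, h₁, ih]
  induction n with
  | zero => simp
  | succ k ih =>
    rw [pow_succ, ih, sub_mul, mul_sub, mul_sub, haq, h₂, h₃, ← pow_succ, sub_self, sub_zero]

/-- The norm is not assumed to satisfy `‖1‖ = 1`, so that the zero ring is covered. -/
lemma spectralRadius_lt_one_of_tendsto_pow {R : Type*} [NormedRing R] [NormedAlgebra ℂ R]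
    [CompleteSpace R] {b : R}
    (h : Filter.Tendsto (fun n : ℕ => b ^ (n + 1)) Filter.atTop (nhds 0)) :
    spectralRadius ℂ b < 1 := by
  have h' : Filter.Tendsto (fun n : ℕ => ‖b ^ (n + 1)‖₊ * ‖(1 : R)‖₊) Filter.atTop (nhds 0) := by
    simpa using h.nnnorm.mul_const ‖(1 : R)‖₊
  obtain ⟨n, hn⟩ := (h'.eventually (gt_mem_nhds zero_lt_one)).exists
  refine (spectrum.spectralRadius_le_pow_nnnorm_pow_one_div ℂ b n).trans_lt ?_
  have hpos : (0 : ℝ) < 1 / (n + 1 : ℝ) := by positivity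
  rw [← ENNReal.mul_rpow_of_nonneg _ _ hpos.le]
  exact ENNReal.rpow_lt_one (by exact_mod_cast hn) hpos

attribute [local instance] Matrix.linftyOpNormedRing Matrix.linftyOpNormedAlgebra in
lemma Matrix.spectralRadius_lt_one_of_tendsto_pow {n : Type*} [Fintype n] [DecidableEq n]
    {B : Matrix n n ℂ}
    (h : Filter.Tendsto (fun k : ℕ => B ^ (k + 1)) Filter.atTop (nhds 0)) :
    spectralRadius ℂ B < 1 :=
  haveI : CompleteSpace (Matrix n n ℂ) := FiniteDimensional.complete ℂ _
  _root_.spectralRadius_lt_one_of_tendsto_pow h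


/-- Necessity in Lemma 1: if `U` has full column rank and the powers of `A`
converge to the projector `P_U = U (U* U)⁻¹ U*`, then `A P_U = P_U`,
`P_U A = P_U`, and `ρ(A - P_U) < 1`. -/
theorem stmt_2 (M P : ℕ)
    (U : Matrix (Fin M) (Fin P) ℂ) (hU : U.rank = P)
    (A : Matrix (Fin M) (Fin M) ℂ)
    (hconv : Filter.Tendsto (fun i : ℕ => A ^ i) Filter.atTop
      (nhds (U * (U.conjTranspose * U)⁻¹ * U.conjTranspose))) :
    A * (U * (U.conjTranspose * U)⁻¹ * U.conjTranspose)
        = U * (U.conjTranspose * U)⁻¹ * U.conjTranspose ∧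
    (U * (U.conjTranspose * U)⁻¹ * U.conjTranspose) * A
        = U * (U.conjTranspose * U)⁻¹ * U.conjTranspose ∧
    spectralRadius ℂ (A - U * (U.conjTranspose * U)⁻¹ * U.conjTranspose) < 1 := by
  have h₁ := mul_limit_of_tendsto_pow hconv
  have h₂ := limit_mul_of_tendsto_pow hconv
  refine ⟨h₁, h₂, Matrix.spectralRadius_lt_one_of_tendsto_pow ?_⟩
  simp only [sub_pow_succ_of_absorbing h₁ h₂ (limit_mul_self_of_tendsto_pow hconv)]
  simpa only [sub_self] using ((Filter.tendsto_add_atTop_iff_nat 1).2 hconv).sub_const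
    (U * (U.conjTranspose * U)⁻¹ * U.conjTranspose)
end

section
/- Let P ∈ ℂ^{M×M} be idempotent (P² = P) and let A ∈ ℂ^{M×M} satisfy A·P = P, P·A = P and ρ(A − P) < 1. Let d ∈ ℂ^M satisfy P·d = 0, let W_0 ∈ ℂ^M be arbitrary, and define recursively W_i = A·W_{i−1} + (I − A)·d for i ≥ 1. Then W_i converges to P·W_0 + d as i → ∞. -/
/-!
Put `B = A - P` and `v = W 0 - P W 0 - d`. Since `P B = 0` and `P v = 0`, the vectors `B ^ i v` are
annihilated by `P`, so `A` acts on them as `B`; moreover `P W 0` is fixed by `A`, and `d` is a fixed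
point of `x ↦ A x + (1 - A) d`. Hence `W i = P W 0 + d + B ^ i v` for every `i`
(`recursion_closed_form`). By Gelfand's formula, spectral radius less than one forces `B ^ i → 0`
(`tendsto_pow_zero_of_spectralRadius_lt_one`), which gives the limit.
-/

open Filter Topology

/-- Gelfand's formula bounds `‖a ^ n‖` eventually by `r ^ n` for some `r < 1`. -/
theorem tendsto_pow_zero_of_spectralRadius_lt_one {R : Type*} [NormedRing R] [NormedAlgebra ℂ R]
    [CompleteSpace R] (a : R) (ha : spectralRadius ℂ a < 1) :
    Tendsto (fun n : ℕ => a ^ n) atTop (𝓝 0) := by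
  obtain ⟨r, har, hr⟩ := ENNReal.lt_iff_exists_nnreal_btwn.1 ha
  have hr1 : r < 1 := by exact_mod_cast hr
  have hev := (spectrum.pow_nnnorm_pow_one_div_tendsto_nhds_spectralRadius a).eventually_lt_const har
  refine squeeze_zero_norm' ?_
    (tendsto_pow_atTop_nhds_zero_of_lt_one r.coe_nonneg (by exact_mod_cast hr1))
  filter_upwards [hev, eventually_gt_atTop 0] with n hn hn0
  have hpos : (0 : ℝ) < n := by exact_mod_cast hn0
  have h := ENNReal.rpow_le_rpow hn.le hpos.le
  rw [← ENNReal.rpow_mul, one_div_mul_cancel hpos.ne', ENNReal.rpow_one, ENNReal.rpow_natCast] at h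
  exact_mod_cast h

theorem recursion_closed_form {M : ℕ} {A P : Matrix (Fin M) (Fin M) ℂ}
    (hP : P * P = P) (hAP : A * P = P) (hPA : P * A = P)
    {d : Fin M → ℂ} (hd : P.mulVec d = 0) {W : ℕ → Fin M → ℂ}
    (hW : ∀ i : ℕ, W (i + 1) = A.mulVec (W i) + (1 - A).mulVec d) (i : ℕ) :
    W i = P.mulVec (W 0) + d + ((A - P) ^ i).mulVec (W 0 - P.mulVec (W 0) - d) := by
  have hker : ∀ n : ℕ, P.mulVec (((A - P) ^ n).mulVec (W 0 - P.mulVec (W 0) - d)) = 0 := by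
    rintro (_ | n)
    · simp [Matrix.mulVec_sub, hP, hd]
    · rw [Matrix.mulVec_mulVec, pow_succ', ← mul_assoc, mul_sub, hPA, hP]
      simp
  induction i with
  | zero => simp
  | succ i ih =>
    rw [hW i, ih, pow_succ', ← Matrix.mulVec_mulVec, Matrix.sub_mulVec A P, hker i]
    simp only [Matrix.mulVec_add, Matrix.sub_mulVec, Matrix.one_mulVec]
    rw [Matrix.mulVec_mulVec (W 0) A P, hAP]
    abel

attribute [local instance] Matrix.linftyOpNormedRing Matrix.linftyOpNormedAlgebra in
/-- The `ℓ^∞` operator norm makes the matrices a Banach algebra; the topology it induces is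
definitionally the entrywise one, in which the limit is taken. -/
theorem matrix_tendsto_pow_zero {M : ℕ} (B : Matrix (Fin M) (Fin M) ℂ)
    (hB : spectralRadius ℂ B < 1) : Tendsto (fun n : ℕ => B ^ n) atTop (𝓝 0) :=
  have : CompleteSpace (Matrix (Fin M) (Fin M) ℂ) := FiniteDimensional.complete ℂ _
  tendsto_pow_zero_of_spectralRadius_lt_one B hB

/-- Appendix B claim: if `P` is idempotent, `A P = P = P A`, `ρ(A - P) < 1`,
`P d = 0`, and `W` satisfies the recursion `W_i = A W_{i-1} + (I - A) d`, then
`W_i → P W_0 + d`. -/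
theorem stmt_6 (M : ℕ) (hM : 0 < M)
    (A P : Matrix (Fin M) (Fin M) ℂ)
    (hP : P * P = P) (hAP : A * P = P) (hPA : P * A = P)
    (hρ : spectralRadius ℂ (A - P) < 1)
    (d : Fin M → ℂ) (hd : P.mulVec d = 0)
    (W : ℕ → Fin M → ℂ)
    (hW : ∀ i : ℕ, W (i + 1) = A.mulVec (W i) + (1 - A).mulVec d) :
    Filter.Tendsto W Filter.atTop (nhds (P.mulVec (W 0) + d)) := by
  have hcont : Continuous fun B : Matrix (Fin M) (Fin M) ℂ =>
      P.mulVec (W 0) + d + B.mulVec (W 0 - P.mulVec (W 0) - d) :=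
    continuous_const.add (continuous_id.matrix_mulVec continuous_const)
  have h := (hcont.tendsto 0).comp (matrix_tendsto_pow_zero (A - P) hρ)
  rw [Matrix.zero_mulVec, add_zero] at h
  exact h.congr fun i => (recursion_closed_form hP hAP hPA hd hW i).symm
end
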